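/- Let q be a power of an odd prime and let φ, C_{γ,α} (γ,α ∈ 𝔽_q) and C_{y,α} be as in the context. Then for all α, α' ∈ 𝔽_q: (i) C_{γ,α}·C_{γ,α'} = q·C_{γ,α+α'} for every γ ∈ 𝔽_q, and C_{y,α}·C_{y,α'} = q·C_{y,α+α'}; (ii) C_{γ,α}·C_{γ',α'} = J_{q²} for all distinct γ, γ' ∈ 𝔽_q, and C_{γ,α}·C_{y,α'} = C_{y,α'}·C_{γ,α} = J_{q²} for every γ ∈ 𝔽_q. -/

import Mathlib

open Matrix Kronecker

/-- The all-ones square matrix over ℤ. -/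
def allOnes (ι : Type*) : Matrix ι ι ℤ := Matrix.of fun _ _ => 1

/-- The regular permutation representation of the additive group of `F`:
`phiMat F x` has (u,v)-entry 1 iff u = v + x. -/
def phiMat (F : Type*) [AddGroup F] [DecidableEq F] (x : F) : Matrix F F ℤ :=
  Matrix.of fun u v => if u = v + x then 1 else 0

/-- The auxiliary matrix C_{α,α'}: the q²×q² block matrix whose (β,β')-block is
φ(α(β'−β) + α'). -/
def Cmat (F : Type*) [Field F] [DecidableEq F] (α α' : F) :
    Matrix (F × F) (F × F) ℤ :=
  Matrix.of fun p p' => phiMat F (α * (p'.1 - p.1) + α') p.2 p'.2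

/-- The auxiliary matrix C_{y,α} = φ(α) ⊗ J_q. -/
def CyMat (F : Type*) [Field F] [Fintype F] [DecidableEq F] (α : F) :
    Matrix (F × F) (F × F) ℤ :=
  phiMat F α ⊗ₖ allOnes F

/-!
Regard `C_{γ,α}` and `C_{y,α}` as matrices whose entries are `q × q` matrices, and multiply
blockwise. Since `φ` is additive-to-multiplicative, the `(β,β')`-block of `C_{γ,α} C_{γ',α'}` is
the sum over `b` of `φ ((γ - γ') b + c)`, where `c` depends only on `β` and `β'`. For `γ = γ'` the
summand is constant; for `γ ≠ γ'` its argument runs once through the whole field, and the matrices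
`φ x` add up to the all-ones matrix. The products with `C_{y,α}` only use that each `φ x` has row
and column sums equal to one.
-/

section BlockMatrices

theorem comp_mul_comp {ι κ R : Type*} [Fintype ι] [Fintype κ] [NonUnitalNonAssocSemiring R]
    (A B : Matrix κ κ (Matrix ι ι R)) :
    comp κ κ ι ι R A * comp κ κ ι ι R B = comp κ κ ι ι R (A * B) :=
  (map_mul (compRingEquiv κ ι R) A B).symm

theorem kronecker_eq_comp {l m n p R : Type*} [Mul R] (A : Matrix l m R) (B : Matrix n p R) :
    A ⊗ₖ B = comp l m n p R (of fun i j => A i j • B) :=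
  rfl

end BlockMatrices

section AllOnes

theorem allOnes_eq_vecMulVec (ι : Type*) : allOnes ι = vecMulVec 1 1 := by
  ext
  simp [allOnes, vecMulVec_apply]

theorem allOnes_mul_allOnes (ι : Type*) [Fintype ι] :
    allOnes ι * allOnes ι = (Fintype.card ι : ℤ) • allOnes ι := by
  ext
  simp [allOnes, mul_apply]

theorem allOnes_prod_eq_comp (κ ι : Type*) :
    allOnes (κ × ι) = comp κ κ ι ι ℤ (of fun _ _ => allOnes ι) :=
  rfl

variable {ι κ : Type*} [Fintype ι]

theorem mul_allOnes_of_mulVec_one {M : Matrix ι ι ℤ} (hM : M *ᵥ 1 = 1) :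
    M * allOnes ι = allOnes ι := by
  rw [allOnes_eq_vecMulVec, mul_vecMulVec, hM]

theorem allOnes_mul_of_one_vecMul {M : Matrix ι ι ℤ} (hM : 1 ᵥ* M = 1) :
    allOnes ι * M = allOnes ι := by
  rw [allOnes_eq_vecMulVec, vecMulVec_mul, hM]

variable [Fintype κ]

theorem comp_mul_kronecker_allOnes {A : Matrix κ κ (Matrix ι ι ℤ)} {B : Matrix κ κ ℤ}
    (hA : ∀ i j, A i j *ᵥ 1 = 1) (hB : 1 ᵥ* B = 1) :
    comp κ κ ι ι ℤ A * B ⊗ₖ allOnes ι = allOnes (κ × ι) := by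
  rw [kronecker_eq_comp, comp_mul_comp, allOnes_prod_eq_comp]
  congr 1
  ext1 i j
  have sum_col : ∑ k, B k j = 1 := by simpa [vecMul, dotProduct] using congrFun hB j
  calc ∑ k, A i k * B k j • allOnes ι
      = ∑ k, B k j • allOnes ι := by
        simp only [mul_smul_comm, mul_allOnes_of_mulVec_one (hA _ _)]
    _ = allOnes ι := by rw [← Finset.sum_smul, sum_col, one_smul]

theorem kronecker_allOnes_mul_comp {A : Matrix κ κ (Matrix ι ι ℤ)} {B : Matrix κ κ ℤ}
    (hA : ∀ i j, 1 ᵥ* A i j = 1) (hB : B *ᵥ 1 = 1) :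
    B ⊗ₖ allOnes ι * comp κ κ ι ι ℤ A = allOnes (κ × ι) := by
  rw [kronecker_eq_comp, comp_mul_comp, allOnes_prod_eq_comp]
  congr 1
  ext1 i j
  have sum_row : ∑ k, B i k = 1 := by simpa [mulVec, dotProduct] using congrFun hB i
  calc ∑ k, B i k • allOnes ι * A k j
      = ∑ k, B i k • allOnes ι := by
        simp only [smul_mul_assoc, allOnes_mul_of_one_vecMul (hA _ _)]
    _ = allOnes ι := by rw [← Finset.sum_smul, sum_row, one_smul]

end AllOnes

section PhiMat

variable {G : Type*} [AddGroup G] [DecidableEq G]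

theorem phiMat_eq_permMatrix (x : G) : phiMat G x = (Equiv.addRight (-x)).permMatrix ℤ := by
  ext u v
  simp [phiMat, PEquiv.toMatrix_apply, ← sub_eq_add_neg, sub_eq_iff_eq_add]

variable [Fintype G]

theorem phiMat_mul_phiMat (x y : G) : phiMat G x * phiMat G y = phiMat G (y + x) := by
  ext u v
  simp [phiMat, mul_apply, add_assoc]

theorem phiMat_mulVec_one (x : G) : phiMat G x *ᵥ 1 = 1 := by
  rw [phiMat_eq_permMatrix, permMatrix_mulVec, Pi.one_comp]

theorem one_vecMul_phiMat (x : G) : 1 ᵥ* phiMat G x = 1 := by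
  rw [phiMat_eq_permMatrix, vecMul_permMatrix, Pi.one_comp]

theorem sum_phiMat (G : Type*) [AddGroup G] [DecidableEq G] [Fintype G] :
    ∑ x, phiMat G x = allOnes G := by
  ext u v
  simp [phiMat, allOnes, Matrix.sum_apply, ← neg_add_eq_iff_eq_add]

theorem sum_phiMat_mul_add {K : Type*} [DivisionRing K] [DecidableEq K] [Fintype K]
    {a : K} (ha : a ≠ 0) (c : K) :
    ∑ b, phiMat K (a * b + c) = allOnes K := by
  have affine_bijective : Function.Bijective fun b => a * b + c :=
    (Equiv.addRight c).bijective.comp (mulLeft_bijective₀ a ha)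
  rw [affine_bijective.sum_comp (phiMat K), sum_phiMat]

end PhiMat

section AuxiliaryMatrices

variable {F : Type*} [Field F] [DecidableEq F]

theorem Cmat_eq_comp (γ α : F) :
    Cmat F γ α = comp F F F F ℤ (of fun β β' => phiMat F (γ * (β' - β) + α)) :=
  rfl

variable [Fintype F]

theorem Cmat_mul_Cmat (γ γ' α α' : F) :
    Cmat F γ α * Cmat F γ' α' = comp F F F F ℤ (of fun β β' =>
      ∑ b, phiMat F ((γ - γ') * b + (γ' * β' - γ * β + (α + α')))) := by
  rw [Cmat_eq_comp, Cmat_eq_comp, comp_mul_comp]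
  congr 1
  ext1 β β'
  refine Finset.sum_congr rfl fun b _ => ?_
  change phiMat F (γ * (b - β) + α) * phiMat F (γ' * (β' - b) + α') = _
  rw [phiMat_mul_phiMat]
  congr 1
  ring

theorem Cmat_mul_Cmat_same (γ α α' : F) :
    Cmat F γ α * Cmat F γ α' = (Fintype.card F : ℤ) • Cmat F γ (α + α') := by
  simp only [Cmat_mul_Cmat, sub_self, zero_mul, zero_add, ← mul_sub, Finset.sum_const,
    Finset.card_univ, natCast_zsmul]
  rfl

theorem Cmat_mul_Cmat_of_ne {γ γ' : F} (h : γ ≠ γ') (α α' : F) :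
    Cmat F γ α * Cmat F γ' α' = allOnes (F × F) := by
  simp only [Cmat_mul_Cmat, sum_phiMat_mul_add (sub_ne_zero.mpr h), allOnes_prod_eq_comp]

theorem CyMat_mul_CyMat (α α' : F) :
    CyMat F α * CyMat F α' = (Fintype.card F : ℤ) • CyMat F (α + α') := by
  rw [CyMat, CyMat, ← mul_kronecker_mul, phiMat_mul_phiMat, allOnes_mul_allOnes, kronecker_smul,
    add_comm, CyMat]

theorem Cmat_mul_CyMat (γ α α' : F) : Cmat F γ α * CyMat F α' = allOnes (F × F) := by
  rw [Cmat_eq_comp, CyMat]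
  exact comp_mul_kronecker_allOnes (fun _ _ => phiMat_mulVec_one _) (one_vecMul_phiMat α')

theorem CyMat_mul_Cmat (γ α α' : F) : CyMat F α' * Cmat F γ α = allOnes (F × F) := by
  rw [Cmat_eq_comp, CyMat]
  exact kronecker_allOnes_mul_comp (fun _ _ => one_vecMul_phiMat _) (phiMat_mulVec_one α')

end AuxiliaryMatrices

theorem products_of_auxiliary_matrices_general (F : Type*) [Field F] [Fintype F] [DecidableEq F]
    (α α' : F) :
    (∀ γ : F, Cmat F γ α * Cmat F γ α' = (Fintype.card F : ℤ) • Cmat F γ (α + α')) ∧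
    (CyMat F α * CyMat F α' = (Fintype.card F : ℤ) • CyMat F (α + α')) ∧
    (∀ γ γ' : F, γ ≠ γ' → Cmat F γ α * Cmat F γ' α' = allOnes (F × F)) ∧
    (∀ γ : F, Cmat F γ α * CyMat F α' = allOnes (F × F) ∧
      CyMat F α' * Cmat F γ α = allOnes (F × F)) :=
  ⟨fun γ => Cmat_mul_Cmat_same γ α α',
    CyMat_mul_CyMat α α',
    fun _ _ h => Cmat_mul_Cmat_of_ne h α α',
    fun γ => ⟨Cmat_mul_CyMat γ α α', CyMat_mul_Cmat γ α α'⟩⟩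

/-- products of the auxiliary matrices: (i) C_{γ,α}·C_{γ,α'} = q·C_{γ,α+α'}
and C_{y,α}·C_{y,α'} = q·C_{y,α+α'}; (ii) for distinct first indices the product is the
all-ones matrix J_{q²}. -/
theorem products_of_auxiliary_matrices (F : Type*) [Field F] [Fintype F] [DecidableEq F]
    (hodd : Odd (Fintype.card F)) (α α' : F) :
    (∀ γ : F, Cmat F γ α * Cmat F γ α' = (Fintype.card F : ℤ) • Cmat F γ (α + α')) ∧
    (CyMat F α * CyMat F α' = (Fintype.card F : ℤ) • CyMat F (α + α')) ∧
    (∀ γ γ' : F, γ ≠ γ' → Cmat F γ α * Cmat F γ' α' = allOnes (F × F)) ∧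
    (∀ γ : F, Cmat F γ α * CyMat F α' = allOnes (F × F) ∧
      CyMat F α' * Cmat F γ α = allOnes (F × F)) :=
  products_of_auxiliary_matrices_general F α α'
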